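/- arXiv:1806.09298 — 3 statements merged into one kernel-verified Lean document; each statement's English description precedes it below -/
import Mathlib

section
/- Assume additionally that K is algebraically closed. Then u and u' are not conjugate in Sp(V, β); that is, there is no invertible matrix g with β(gv, gw) = β(v, w) for all v, w ∈ V and g u g⁻¹ = u'. -/
open Matrix

/-- `E i j`: the 10×10 matrix with a single `1` in position `(i, j)`. -/
def Emat (K : Type*) [Field K] (i j : Fin 10) : Matrix (Fin 10) (Fin 10) K :=
  Matrix.single i j 1

/-- The antidiagonal Gram matrix `J` of the alternating form `β(v, w) = vᵀ J w`. -/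
def Jmat (K : Type*) [Field K] : Matrix (Fin 10) (Fin 10) K :=
  Matrix.of fun i j => if (i : ℕ) + (j : ℕ) = 9 then 1 else 0

/-- The generator `A = I + E₁,₅ + E₁,₁₀ + E₆,₁₀` (1-indexed). -/
def Amat (K : Type*) [Field K] : Matrix (Fin 10) (Fin 10) K :=
  1 + Emat K 0 4 + Emat K 0 9 + Emat K 5 9

/-- The generator `B = E₂,₁ + E₃,₂ + E₄,₃ + E₅,₄ + E₁₀,₅ + E₉,₁₀ + E₈,₉ + E₇,₈ + E₆,₇ + E₁,₆`
(1-indexed). -/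
def Bmat (K : Type*) [Field K] : Matrix (Fin 10) (Fin 10) K :=
  Emat K 1 0 + Emat K 2 1 + Emat K 3 2 + Emat K 4 3 + Emat K 9 4 +
    Emat K 8 9 + Emat K 7 8 + Emat K 6 7 + Emat K 5 6 + Emat K 0 5

/-- `u = B⁴AB⁶AB⁵A`. -/
def uMat (K : Type*) [Field K] : Matrix (Fin 10) (Fin 10) K :=
  Bmat K ^ 4 * Amat K * Bmat K ^ 6 * Amat K * Bmat K ^ 5 * Amat K

/-- `u' = BAB²AB⁴AB³A`. -/
def u'Mat (K : Type*) [Field K] : Matrix (Fin 10) (Fin 10) K :=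
  Bmat K * Amat K * Bmat K ^ 2 * Amat K * Bmat K ^ 4 * Amat K * Bmat K ^ 3 * Amat K

/-- Action of `A` on a column vector, in coordinates. -/
lemma Amat_mulVec (K : Type*) [Field K] (a b c d e f g h i j : K) :
    Amat K *ᵥ ![a, b, c, d, e, f, g, h, i, j] =
      ![a + e + j, b, c, d, e, f + j, g, h, i, j] := by
  ext k
  fin_cases k <;>
    simp [Amat, Emat, Matrix.mulVec, dotProduct, Fin.sum_univ_succ, Matrix.single_apply,
      Matrix.one_apply, add_assoc]

/-- Action of `B` on a column vector, in coordinates. -/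
lemma Bmat_mulVec (K : Type*) [Field K] (a b c d e f g h i j : K) :
    Bmat K *ᵥ ![a, b, c, d, e, f, g, h, i, j] =
      ![f, a, b, c, d, g, h, i, j, e] := by
  ext k
  fin_cases k <;>
    simp [Bmat, Emat, Matrix.mulVec, dotProduct, Matrix.single_apply]

/-- Action of `J` on a column vector, in coordinates. -/
lemma Jmat_mulVec (K : Type*) [Field K] (a b c d e f g h i j : K) :
    Jmat K *ᵥ ![a, b, c, d, e, f, g, h, i, j] =
      ![j, i, h, g, f, e, d, c, b, a] := by
  ext k
  fin_cases k <;>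
    simp [Jmat, Matrix.mulVec, dotProduct, Fin.sum_univ_succ]

/-- The vector `e₂` is mapped by `u` to `e₉`. -/
lemma uMat_e2 (K : Type*) [Field K] :
    uMat K *ᵥ ![0, 1, 0, 0, 0, 0, 0, 0, 0, 0] = ![0, 0, 0, 0, 0, 0, 0, 0, 1, 0] := by
  simp only [uMat, pow_succ, pow_zero, one_mul, ← Matrix.mulVec_mulVec, Amat_mulVec, Bmat_mulVec,
    add_zero]

/-- The vector `e₉` is mapped by `u` to `e₂`. -/
lemma uMat_e9 (K : Type*) [Field K] :
    uMat K *ᵥ ![0, 0, 0, 0, 0, 0, 0, 0, 1, 0] = ![0, 1, 0, 0, 0, 0, 0, 0, 0, 0] := by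
  simp only [uMat, pow_succ, pow_zero, one_mul, ← Matrix.mulVec_mulVec, Amat_mulVec, Bmat_mulVec,
    add_zero]

/-- In characteristic two, the form vanishes on the pair of `x` and its image under the second
element, for every `x` fixed by the square of that element. -/
lemma u'Mat_form (K : Type*) [Field K] [CharP K 2] (x : Fin 10 → K)
    (hx : u'Mat K *ᵥ (u'Mat K *ᵥ x) = x) :
    dotProduct x (Jmat K *ᵥ (u'Mat K *ᵥ x)) = 0 := by
  have h2 : (2 : K) = 0 := CharTwo.two_eq_zero
  obtain ⟨a, b, c, d, e, f, g, h, i, j, rfl⟩ : ∃ a b c d e f g h i j : K,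
      x = ![a, b, c, d, e, f, g, h, i, j] :=
    ⟨x 0, x 1, x 2, x 3, x 4, x 5, x 6, x 7, x 8, x 9, by ext k; fin_cases k <;> rfl⟩
  simp only [u'Mat, pow_succ, pow_zero, one_mul, ← Matrix.mulVec_mulVec, Amat_mulVec, Bmat_mulVec,
    Jmat_mulVec] at hx ⊢
  have e0 := congrFun hx 0
  have e3 := congrFun hx 3
  have e7 := congrFun hx 7
  have e8 := congrFun hx 8
  simp [dotProduct, Fin.sum_univ_succ] at e0 e3 e7 e8 ⊢
  have hg : g = 0 := by grind
  have hc : c = 0 := by grind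
  have hj : j = i := by grind
  have hb : b = 0 := by grind
  subst hg hc hj hb
  grind

/-- over an algebraically closed `K` of characteristic `2`, the elements `u` and its
partner are not conjugate in `Sp(V, β)`. -/
theorem statement11 (K : Type*) [Field K] [CharP K 2] [IsAlgClosed K] :
    ¬ ∃ g : (Matrix (Fin 10) (Fin 10) K)ˣ,
      (∀ v w : Fin 10 → K,
        dotProduct ((g : Matrix (Fin 10) (Fin 10) K).mulVec v)
            ((Jmat K).mulVec ((g : Matrix (Fin 10) (Fin 10) K).mulVec w)) =
          dotProduct v ((Jmat K).mulVec w)) ∧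
      (g : Matrix (Fin 10) (Fin 10) K) * uMat K * ((g⁻¹ : (Matrix (Fin 10) (Fin 10) K)ˣ) :
        Matrix (Fin 10) (Fin 10) K) = u'Mat K := by
  rintro ⟨g, hg, hu⟩
  have hcomm : ∀ w : Fin 10 → K, u'Mat K *ᵥ ((g : Matrix (Fin 10) (Fin 10) K) *ᵥ w) =
      (g : Matrix (Fin 10) (Fin 10) K) *ᵥ (uMat K *ᵥ w) := by
    intro w
    rw [← hu, Matrix.mulVec_mulVec, Matrix.mulVec_mulVec, Units.inv_mul_cancel_right]
  have hzero := u'Mat_form K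
    ((g : Matrix (Fin 10) (Fin 10) K) *ᵥ ![0, 1, 0, 0, 0, 0, 0, 0, 0, 0])
    (by rw [hcomm, hcomm, uMat_e2, uMat_e9])
  rw [hcomm, hg, uMat_e2, Jmat_mulVec] at hzero
  simp [dotProduct, Fin.sum_univ_succ] at hzero
end

section
/- Assume additionally that K is algebraically closed. Then u and u' are conjugate in GL_10(K); that is, there exists an invertible 10×10 matrix g over K with g u g⁻¹ = u'. -/
open Matrix

/-- The matrix over `ZMod 2` whose `i`-th row is given by the binary digits of `r i`. -/
def ofBits (r : Fin 10 → ℕ) : Matrix (Fin 10) (Fin 10) (ZMod 2) :=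
  Matrix.of fun i j => if (r i).testBit j then 1 else 0

def A0 : Matrix (Fin 10) (Fin 10) (ZMod 2) := ofBits ![529, 2, 4, 8, 16, 544, 64, 128, 256, 512]

def B0 : Matrix (Fin 10) (Fin 10) (ZMod 2) := ofBits ![32, 1, 2, 4, 8, 64, 128, 256, 512, 16]

def B2 : Matrix (Fin 10) (Fin 10) (ZMod 2) := ofBits ![64, 32, 1, 2, 4, 128, 256, 512, 16, 8]

def B3 : Matrix (Fin 10) (Fin 10) (ZMod 2) := ofBits ![128, 64, 32, 1, 2, 256, 512, 16, 8, 4]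

def B4 : Matrix (Fin 10) (Fin 10) (ZMod 2) := ofBits ![256, 128, 64, 32, 1, 512, 16, 8, 4, 2]

def B5 : Matrix (Fin 10) (Fin 10) (ZMod 2) := ofBits ![512, 256, 128, 64, 32, 16, 8, 4, 2, 1]

def B6 : Matrix (Fin 10) (Fin 10) (ZMod 2) := ofBits ![16, 512, 256, 128, 64, 8, 4, 2, 1, 32]

def u0 : Matrix (Fin 10) (Fin 10) (ZMod 2) := ofBits ![256, 128, 64, 544, 529, 512, 16, 8, 4, 2]

def u1 : Matrix (Fin 10) (Fin 10) (ZMod 2) := ofBits ![1, 2, 4, 40, 112, 32, 64, 128, 256, 512]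

def u2 : Matrix (Fin 10) (Fin 10) (ZMod 2) := ofBits ![529, 2, 4, 552, 624, 544, 64, 128, 256, 512]

def u3 : Matrix (Fin 10) (Fin 10) (ZMod 2) := ofBits ![545, 256, 128, 81, 57, 17, 8, 4, 2, 1]

def u4 : Matrix (Fin 10) (Fin 10) (ZMod 2) := ofBits ![561, 256, 128, 577, 41, 513, 8, 4, 2, 529]

def v0 : Matrix (Fin 10) (Fin 10) (ZMod 2) := ofBits ![544, 529, 2, 4, 8, 64, 128, 256, 512, 16]

def v1 : Matrix (Fin 10) (Fin 10) (ZMod 2) := ofBits ![136, 76, 32, 1, 2, 256, 512, 16, 8, 4]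

def v2 : Matrix (Fin 10) (Fin 10) (ZMod 2) := ofBits ![136, 76, 544, 529, 2, 256, 512, 16, 8, 4]

def v3 : Matrix (Fin 10) (Fin 10) (ZMod 2) := ofBits ![40, 112, 514, 259, 128, 4, 2, 1, 32, 64]

def v4 : Matrix (Fin 10) (Fin 10) (ZMod 2) := ofBits ![552, 624, 514, 787, 128, 4, 2, 529, 544, 64]

def v5 : Matrix (Fin 10) (Fin 10) (ZMod 2) := ofBits ![261, 774, 68, 206, 16, 32, 64, 134, 260, 512]

def v6 : Matrix (Fin 10) (Fin 10) (ZMod 2) := ofBits ![789, 774, 68, 206, 16, 544, 64, 134, 260, 512]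

def g0 : Matrix (Fin 10) (Fin 10) (ZMod 2) := ofBits ![965, 577, 32, 554, 258, 643, 545, 315, 494, 935]

def h0 : Matrix (Fin 10) (Fin 10) (ZMod 2) := ofBits ![265, 579, 119, 770, 671, 4, 70, 551, 595, 333]

def gu : Matrix (Fin 10) (Fin 10) (ZMod 2) := ofBits ![174, 40, 513, 849, 258, 292, 545, 858, 462, 935]

theorem B2_eq : B0 * B0 = B2 := by decide +kernel

theorem B3_eq : B2 * B0 = B3 := by decide +kernel

theorem B4_eq : B3 * B0 = B4 := by decide +kernel

theorem B5_eq : B4 * B0 = B5 := by decide +kernel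

theorem B6_eq : B5 * B0 = B6 := by decide +kernel

theorem u0_eq : B4 * A0 = u0 := by decide +kernel

theorem u1_eq : u0 * B6 = u1 := by decide +kernel

theorem u2_eq : u1 * A0 = u2 := by decide +kernel

theorem u3_eq : u2 * B5 = u3 := by decide +kernel

theorem u4_eq : u3 * A0 = u4 := by decide +kernel

theorem v0_eq : B0 * A0 = v0 := by decide +kernel

theorem v1_eq : v0 * B2 = v1 := by decide +kernel

theorem v2_eq : v1 * A0 = v2 := by decide +kernel

theorem v3_eq : v2 * B4 = v3 := by decide +kernel

theorem v4_eq : v3 * A0 = v4 := by decide +kernel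

theorem v5_eq : v4 * B3 = v5 := by decide +kernel

theorem v6_eq : v5 * A0 = v6 := by decide +kernel

theorem gu_eq : g0 * u4 = gu := by decide +kernel

theorem vg_eq : v6 * g0 = gu := by decide +kernel

theorem gh : g0 * h0 = 1 := by decide +kernel

theorem hg : h0 * g0 = 1 := by decide +kernel

theorem A0_eq : Amat (ZMod 2) = A0 := by unfold Amat Emat; decide +kernel

theorem B0_eq : Bmat (ZMod 2) = B0 := by unfold Bmat Emat; decide +kernel

theorem u_eq : uMat (ZMod 2) = u4 := by
  unfold uMat
  simp only [A0_eq, B0_eq, pow_succ, pow_zero, one_mul, B2_eq, B3_eq, B4_eq, B5_eq, B6_eq,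
    u0_eq, u1_eq, u2_eq, u3_eq, u4_eq]

theorem v_eq : u'Mat (ZMod 2) = v6 := by
  unfold u'Mat
  simp only [A0_eq, B0_eq, pow_succ, pow_zero, one_mul, B2_eq, B3_eq, B4_eq,
    v0_eq, v1_eq, v2_eq, v3_eq, v4_eq, v5_eq, v6_eq]

section
variable (K : Type*) [Field K] (f : ZMod 2 →+* K)

theorem A_map : f.mapMatrix (Amat (ZMod 2)) = Amat K := by
  simp [Amat, Emat, map_add, RingHom.mapMatrix_apply, Matrix.map_single]

theorem B_map : f.mapMatrix (Bmat (ZMod 2)) = Bmat K := by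
  simp only [Bmat, Emat, map_add, RingHom.mapMatrix_apply, Matrix.map_single, map_one]

end

theorem key0 : g0 * uMat (ZMod 2) = u'Mat (ZMod 2) * g0 := by
  rw [u_eq, v_eq, gu_eq, vg_eq]


/-- over an algebraically closed `K` of characteristic `2`, the elements `u`
and `u'` are conjugate in `GL₁₀(K)`: there is an invertible matrix `g` with `g u g⁻¹ = u'`. -/
theorem statement12 (K : Type*) [Field K] [CharP K 2] [IsAlgClosed K] :
    ∃ g : (Matrix (Fin 10) (Fin 10) K)ˣ,
      (g : Matrix (Fin 10) (Fin 10) K) * uMat K * ((g⁻¹ : (Matrix (Fin 10) (Fin 10) K)ˣ) :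
        Matrix (Fin 10) (Fin 10) K) = u'Mat K := by
  let f : ZMod 2 →+* K := ZMod.castHom (dvd_refl 2) K
  have hu : f.mapMatrix (uMat (ZMod 2)) = uMat K := by
    simp only [uMat, map_mul, map_pow, A_map, B_map]
  have hv : f.mapMatrix (u'Mat (ZMod 2)) = u'Mat K := by
    simp only [u'Mat, map_mul, map_pow, A_map, B_map]
  refine ⟨⟨f.mapMatrix g0, f.mapMatrix h0, by rw [← map_mul, gh, map_one],
    by rw [← map_mul, hg, map_one]⟩, ?_⟩
  change f.mapMatrix g0 * uMat K * f.mapMatrix h0 = u'Mat K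
  rw [← hu, ← hv, ← map_mul, key0, ← map_mul, mul_assoc, gh, mul_one]
end

section
/- Assume additionally that K is algebraically closed. For every natural number n, the K-linear automorphisms of the n-th exterior power ⋀ⁿV induced by u and by u' are conjugate in GL(⋀ⁿV); that is, u and u' act similarly on every exterior power of the natural module V. -/
open Matrix

/-- The endomorphism of the `n`-th exterior power `⋀[K]^n M` induced by an endomorphism `f`
of `M`, obtained by restricting `ExteriorAlgebra.map f` to the submodule `⋀[K]^n M`. -/
def extPowMap (K : Type*) [Field K] {M : Type*} [AddCommGroup M] [Module K M] (n : ℕ)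
    (f : M →ₗ[K] M) : ⋀[K]^n M →ₗ[K] ⋀[K]^n M :=
  (ExteriorAlgebra.map f).toLinearMap.restrict (p := ⋀[K]^n M) (q := ⋀[K]^n M)
    (fun x hx => by
      have h : Submodule.map (ExteriorAlgebra.map f).toLinearMap (⋀[K]^n M) ≤ ⋀[K]^n M := by
        rw [show (⋀[K]^n M : Submodule K (ExteriorAlgebra K M)) =
            LinearMap.range (ExteriorAlgebra.ι K (M := M)) ^ n from rfl,
          Submodule.map_pow, ExteriorAlgebra.ι_range_map_map]
        exact pow_le_pow_left' LinearMap.map_le_range n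
      exact h ⟨x, hx, rfl⟩)

/-- The matrix over `ZMod 2` whose `i`-th row has the binary digits of `r i` as entries. -/
def bitMat (r : Fin 10 → ℕ) : Matrix (Fin 10) (Fin 10) (ZMod 2) :=
  Matrix.of fun i j => if (r i).testBit j then 1 else 0

def mA : Matrix (Fin 10) (Fin 10) (ZMod 2) :=
  bitMat ![529, 2, 4, 8, 16, 544, 64, 128, 256, 512]

def mB : Matrix (Fin 10) (Fin 10) (ZMod 2) :=
  bitMat ![32, 1, 2, 4, 8, 64, 128, 256, 512, 16]

def mB2 : Matrix (Fin 10) (Fin 10) (ZMod 2) :=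
  bitMat ![64, 32, 1, 2, 4, 128, 256, 512, 16, 8]

theorem mB2_eq : mB * mB = mB2 := by decide +kernel

def mB3 : Matrix (Fin 10) (Fin 10) (ZMod 2) :=
  bitMat ![128, 64, 32, 1, 2, 256, 512, 16, 8, 4]

theorem mB3_eq : mB2 * mB = mB3 := by decide +kernel

def mB4 : Matrix (Fin 10) (Fin 10) (ZMod 2) :=
  bitMat ![256, 128, 64, 32, 1, 512, 16, 8, 4, 2]

theorem mB4_eq : mB3 * mB = mB4 := by decide +kernel

def mB5 : Matrix (Fin 10) (Fin 10) (ZMod 2) :=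
  bitMat ![512, 256, 128, 64, 32, 16, 8, 4, 2, 1]

theorem mB5_eq : mB4 * mB = mB5 := by decide +kernel

def mB6 : Matrix (Fin 10) (Fin 10) (ZMod 2) :=
  bitMat ![16, 512, 256, 128, 64, 8, 4, 2, 1, 32]

theorem mB6_eq : mB5 * mB = mB6 := by decide +kernel

def mU0 : Matrix (Fin 10) (Fin 10) (ZMod 2) :=
  bitMat ![256, 128, 64, 544, 529, 512, 16, 8, 4, 2]

theorem mU0_eq : mB4 * mA = mU0 := by decide +kernel

def mU1 : Matrix (Fin 10) (Fin 10) (ZMod 2) :=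
  bitMat ![1, 2, 4, 40, 112, 32, 64, 128, 256, 512]

theorem mU1_eq : mU0 * mB6 = mU1 := by decide +kernel

def mU2 : Matrix (Fin 10) (Fin 10) (ZMod 2) :=
  bitMat ![529, 2, 4, 552, 624, 544, 64, 128, 256, 512]

theorem mU2_eq : mU1 * mA = mU2 := by decide +kernel

def mU3 : Matrix (Fin 10) (Fin 10) (ZMod 2) :=
  bitMat ![545, 256, 128, 81, 57, 17, 8, 4, 2, 1]

theorem mU3_eq : mU2 * mB5 = mU3 := by decide +kernel

def mU4 : Matrix (Fin 10) (Fin 10) (ZMod 2) :=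
  bitMat ![561, 256, 128, 577, 41, 513, 8, 4, 2, 529]

theorem mU4_eq : mU3 * mA = mU4 := by decide +kernel

def mV0 : Matrix (Fin 10) (Fin 10) (ZMod 2) :=
  bitMat ![544, 529, 2, 4, 8, 64, 128, 256, 512, 16]

theorem mV0_eq : mB * mA = mV0 := by decide +kernel

def mV1 : Matrix (Fin 10) (Fin 10) (ZMod 2) :=
  bitMat ![136, 76, 32, 1, 2, 256, 512, 16, 8, 4]

theorem mV1_eq : mV0 * mB2 = mV1 := by decide +kernel

def mV2 : Matrix (Fin 10) (Fin 10) (ZMod 2) :=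
  bitMat ![136, 76, 544, 529, 2, 256, 512, 16, 8, 4]

theorem mV2_eq : mV1 * mA = mV2 := by decide +kernel

def mV3 : Matrix (Fin 10) (Fin 10) (ZMod 2) :=
  bitMat ![40, 112, 514, 259, 128, 4, 2, 1, 32, 64]

theorem mV3_eq : mV2 * mB4 = mV3 := by decide +kernel

def mV4 : Matrix (Fin 10) (Fin 10) (ZMod 2) :=
  bitMat ![552, 624, 514, 787, 128, 4, 2, 529, 544, 64]

theorem mV4_eq : mV3 * mA = mV4 := by decide +kernel

def mV5 : Matrix (Fin 10) (Fin 10) (ZMod 2) :=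
  bitMat ![261, 774, 68, 206, 16, 32, 64, 134, 260, 512]

theorem mV5_eq : mV4 * mB3 = mV5 := by decide +kernel

def mV6 : Matrix (Fin 10) (Fin 10) (ZMod 2) :=
  bitMat ![789, 774, 68, 206, 16, 544, 64, 134, 260, 512]

theorem mV6_eq : mV5 * mA = mV6 := by decide +kernel

def mP : Matrix (Fin 10) (Fin 10) (ZMod 2) :=
  bitMat ![10, 8, 513, 16, 258, 4, 545, 17, 204, 132]

def mQ : Matrix (Fin 10) (Fin 10) (ZMod 2) :=
  bitMat ![136, 3, 32, 2, 8, 68, 770, 544, 19, 140]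

def mPU : Matrix (Fin 10) (Fin 10) (ZMod 2) :=
  bitMat ![833, 577, 32, 41, 258, 128, 545, 536, 717, 132]

theorem mPU_eq : mP * mU4 = mPU := by decide +kernel

theorem mVP_eq : mV6 * mP = mPU := by decide +kernel

theorem mPQ_eq : mP * mQ = 1 := by decide +kernel

theorem Amat_two : Amat (ZMod 2) = mA := by decide +kernel

theorem Bmat_two : Bmat (ZMod 2) = mB := by decide +kernel

theorem mB_pow : mB ^ 2 = mB2 ∧ mB ^ 3 = mB3 ∧ mB ^ 4 = mB4 ∧ mB ^ 5 = mB5 ∧ mB ^ 6 = mB6 := by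
  simp only [pow_succ, pow_zero, one_mul, mB2_eq, mB3_eq, mB4_eq, mB5_eq, mB6_eq, and_self]

theorem uMat_two : uMat (ZMod 2) = mU4 := by
  obtain ⟨h2, h3, h4, h5, h6⟩ := mB_pow
  rw [uMat, Amat_two, Bmat_two, h4, h5, h6, mU0_eq, mU1_eq, mU2_eq, mU3_eq, mU4_eq]

theorem u'Mat_two : u'Mat (ZMod 2) = mV6 := by
  obtain ⟨h2, h3, h4, h5, h6⟩ := mB_pow
  rw [u'Mat, Amat_two, Bmat_two, h2, h3, h4, mV0_eq, mV1_eq, mV2_eq, mV3_eq, mV4_eq, mV5_eq, mV6_eq]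

section transfer
variable (K : Type*) [Field K] [CharP K 2]

theorem Emat_map (i j : Fin 10) :
    (ZMod.castHom (dvd_refl 2) K).mapMatrix (Emat (ZMod 2) i j) = Emat K i j := by
  simp [Emat, RingHom.mapMatrix_apply, Matrix.map_single]

theorem uMat_map : (ZMod.castHom (dvd_refl 2) K).mapMatrix (uMat (ZMod 2)) = uMat K := by
  simp only [uMat, Amat, Bmat, map_mul, map_pow, map_add, map_one, Emat_map]

theorem u'Mat_map : (ZMod.castHom (dvd_refl 2) K).mapMatrix (u'Mat (ZMod 2)) = u'Mat K := by
  simp only [u'Mat, Amat, Bmat, map_mul, map_pow, map_add, map_one, Emat_map]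

theorem exists_conj : ∃ P Q : Matrix (Fin 10) (Fin 10) K,
    P * Q = 1 ∧ Q * P = 1 ∧ P * uMat K = u'Mat K * P := by
  let φ := (ZMod.castHom (dvd_refl 2) K).mapMatrix (m := Fin 10)
  have h1 : φ mP * φ mQ = 1 := by rw [← map_mul, mPQ_eq, map_one]
  refine ⟨φ mP, φ mQ, h1, mul_eq_one_comm.mp h1, ?_⟩
  rw [← uMat_map, ← u'Mat_map, ← map_mul, ← map_mul, uMat_two, u'Mat_two, mPU_eq, mVP_eq]

end transfer

theorem extPowMap_comp (K : Type*) [Field K] {M : Type*} [AddCommGroup M] [Module K M] (n : ℕ)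
    (f g : M →ₗ[K] M) (x : ⋀[K]^n M) :
    extPowMap K n f (extPowMap K n g x) = extPowMap K n (f ∘ₗ g) x := by
  apply Subtype.ext
  change ExteriorAlgebra.map f (ExteriorAlgebra.map g x) = ExteriorAlgebra.map (f ∘ₗ g) x
  rw [← ExteriorAlgebra.map_comp_map]
  rfl

theorem extPowMap_one (K : Type*) [Field K] {M : Type*} [AddCommGroup M] [Module K M] (n : ℕ)
    (x : ⋀[K]^n M) : extPowMap K n LinearMap.id x = x := by
  apply Subtype.ext
  change ExteriorAlgebra.map LinearMap.id (x : ExteriorAlgebra K M) = x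
  rw [ExteriorAlgebra.map_id]
  rfl

/-- over an algebraically closed `K` of characteristic `2`, for every `n`
the automorphisms of `⋀ⁿV` induced by `u` and by `u'` are conjugate in `GL(⋀ⁿV)`: there is
a linear automorphism `g` of `⋀[K]^n (Fin 10 → K)` conjugating the map induced by `u` to
the map induced by `u'`. -/
theorem statement13 (K : Type*) [Field K] [CharP K 2] [IsAlgClosed K] (n : ℕ) :
    ∃ g : (⋀[K]^n (Fin 10 → K)) ≃ₗ[K] (⋀[K]^n (Fin 10 → K)),
      ∀ x : ⋀[K]^n (Fin 10 → K),
        g (extPowMap K n (Matrix.mulVecLin (uMat K)) (g.symm x)) =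
          extPowMap K n (Matrix.mulVecLin (u'Mat K)) x := by
  obtain ⟨P, Q, hPQ, hQP, h⟩ := exists_conj K
  refine ⟨LinearEquiv.ofLinearMap (extPowMap K n P.mulVecLin) (extPowMap K n Q.mulVecLin)
    ?_ ?_, ?_⟩
  · refine LinearMap.ext fun x => ?_
    rw [LinearMap.comp_apply, extPowMap_comp, ← Matrix.mulVecLin_mul, hPQ, Matrix.mulVecLin_one,
      extPowMap_one, LinearMap.id_apply]
  · refine LinearMap.ext fun x => ?_
    rw [LinearMap.comp_apply, extPowMap_comp, ← Matrix.mulVecLin_mul, hQP, Matrix.mulVecLin_one,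
      extPowMap_one, LinearMap.id_apply]
  · intro x
    change extPowMap K n P.mulVecLin (extPowMap K n _ (extPowMap K n Q.mulVecLin x)) = _
    rw [extPowMap_comp, extPowMap_comp, ← Matrix.mulVecLin_mul, ← Matrix.mulVecLin_mul,
      h, Matrix.mul_assoc, hPQ, Matrix.mul_one]
end
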